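/- Let V be a finite set of propositional variables partitioned into two disjoint sets X and Y, let k ∈ ℕ, and let C be a Boolean circuit over input variables V using only binary conjunction gates and negation gates; model C as a finite sequence of nodes g₁,…,g_N where each node g_r is labeled either with an input variable w ∈ V, or with ¬g_a for some a < r, or with g_a ∧ g_b for some a,b < r, the value of each node under a truth assignment V → Bool being defined by recursion in the obvious way, and the output of C being the value of g_N. Introduce a fresh variable z_r for every node g_r, and let ψ′ be the 3DNF formula over the variables V ∪ {z₁,…,z_N} given by ψ′ = (⋁_{r=1}^{N} χ_r) ∨ z_N, where: χ_r = (z_r ∧ ¬z_a) ∨ (z_r ∧ ¬z_b) ∨ (z_a ∧ z_b ∧ ¬z_r) if g_r is labeled g_a ∧ g_b; χ_r = (z_r ∧ z_a) ∨ (¬z_r ∧ ¬z_a) if g_r is labeled ¬g_a; and χ_r = (z_r ∧ ¬w) ∨ (¬z_r ∧ w) if g_r is labeled with the input variable w. Then the following are equivalent: (1) there exists a truth assignment α : X → Bool of weight k such that for every truth assignment β : Y → Bool the output of C under α ∪ β is true; (2) there exists a truth assignment α : X → Bool of weight k such that for every truth assignment γ : Y ∪ {z₁,…,z_N} → Bool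 the formula ψ′ evaluates to true under α ∪ γ. -/

import Mathlib

/-!
A disjunct `χ_r` states that `z_r` violates the gate equation of node `r`. Hence all of them fail
exactly when every `z_r` is the value of node `r`, and then the last disjunct `z_N` is the output of
the circuit. So the only assignment to the universally quantified `z_r` that matters is the one
computed by the circuit, and the equivalence holds separately for every assignment to `X`.
-/

/-- A node of a Boolean circuit over input variables `V`: either labeled with an input
variable, with the negation of an earlier node, or with the binary conjunction of two
earlier nodes (nodes are referenced by their index). -/
inductive CNode (V : Type) : Type
  | input (w : V)
  | neg (a : ℕ)
  | conj (a b : ℕ)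

/-- The value of node `r` of the circuit `g` under the truth assignment `σ`, defined by
recursion in the obvious way (references to nodes that are not strictly earlier are
irrelevant for well-formed circuits; they default to `false`). -/
def nodeVal {V : Type} (g : ℕ → CNode V) (σ : V → Bool) : ℕ → Bool
  | r =>
    match g r with
    | CNode.input w => σ w
    | CNode.neg a => if h : a < r then !(nodeVal g σ a) else false
    | CNode.conj a b =>
        if h : a < r ∧ b < r then nodeVal g σ a && nodeVal g σ b else false
termination_by r => r

/-- The Tseitin disjunct `χ_r` of the 3DNF formula `ψ'` for node `r`, evaluated under the
assignment `σ` to the circuit inputs and the assignment `ζ` to the fresh variables `z_r`. -/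
def chiHolds {V : Type} (g : ℕ → CNode V) (σ : V → Bool) (ζ : ℕ → Bool) (r : ℕ) : Prop :=
  match g r with
  | CNode.input w => (ζ r = true ∧ σ w = false) ∨ (ζ r = false ∧ σ w = true)
  | CNode.neg a => (ζ r = true ∧ ζ a = true) ∨ (ζ r = false ∧ ζ a = false)
  | CNode.conj a b =>
      (ζ r = true ∧ ζ a = false) ∨ (ζ r = true ∧ ζ b = false) ∨
        (ζ a = true ∧ ζ b = true ∧ ζ r = false)

/-- The 3DNF formula `ψ' = (⋁_{r<N} χ_r) ∨ z_N` (for the circuit with nodes indexed by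
`0,…,N-1` and output node `N-1`) evaluates to true under `σ` and `ζ`. -/
def psiSat {V : Type} (g : ℕ → CNode V) (σ : V → Bool) (ζ : ℕ → Bool) (N : ℕ) : Prop :=
  (∃ r < N, chiHolds g σ ζ r) ∨ ζ (N - 1) = true

/-- The weight of a truth assignment: the number of variables it maps to true. -/
def weight {X : Type} [Fintype X] (α : X → Bool) : ℕ :=
  (Finset.univ.filter fun x => α x = true).card

namespace CNode

variable {V : Type} {c : CNode V} {r : ℕ} {σ : V → Bool} {ζ ζ' : ℕ → Bool}

/-- Well-formedness of a single circuit node: a node labeled `c` at index `r` refers only to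
nodes strictly before `r`. -/
def RefsBelow (c : CNode V) (r : ℕ) : Prop :=
  (∀ a, c = neg a → a < r) ∧ (∀ a b, c = conj a b → a < r ∧ b < r)

/-- The right-hand side of the gate equation of a node labeled `c`: the value the label prescribes
when the inputs are given by `σ` and the nodes it refers to have the values `ζ`, which need not be
those computed by any circuit. -/
def gateVal (σ : V → Bool) (ζ : ℕ → Bool) : CNode V → Bool
  | input w => σ w
  | neg a => !ζ a
  | conj a b => ζ a && ζ b

theorem RefsBelow.gateVal_congr (hc : c.RefsBelow r) (hζ : ∀ s < r, ζ s = ζ' s) :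
    c.gateVal σ ζ = c.gateVal σ ζ' := by
  cases c with
  | input w => rfl
  | neg a => simp only [gateVal, hζ a (hc.1 a rfl)]
  | conj a b =>
    obtain ⟨ha, hb⟩ := hc.2 a b rfl
    simp only [gateVal, hζ a ha, hζ b hb]

end CNode

section Tseitin

variable {V : Type} {g : ℕ → CNode V} {σ : V → Bool} {ζ : ℕ → Bool} {r N : ℕ}

theorem nodeVal_eq_gateVal (hr : (g r).RefsBelow r) :
    nodeVal g σ r = (g r).gateVal σ (nodeVal g σ) := by
  rw [nodeVal]
  cases hg : g r with
  | input w => rfl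
  | neg a => simp only [hr.1 a hg, dif_pos, CNode.gateVal]
  | conj a b => simp only [hr.2 a b hg, and_self, dif_pos, CNode.gateVal]

theorem chiHolds_iff_ne_gateVal : chiHolds g σ ζ r ↔ ζ r ≠ (g r).gateVal σ ζ := by
  rw [chiHolds]
  cases g r with
  | input w => cases ζ r <;> cases h : σ w <;> simp [CNode.gateVal, h]
  | neg a => cases ζ r <;> cases h : ζ a <;> simp [CNode.gateVal, h]
  | conj a b => cases ζ r <;> cases ha : ζ a <;> cases hb : ζ b <;> simp [CNode.gateVal, ha, hb]

theorem forall_eq_gateVal_iff_forall_eq_nodeVal (hwf : ∀ r < N, (g r).RefsBelow r) :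
    (∀ r < N, ζ r = (g r).gateVal σ ζ) ↔ ∀ r < N, ζ r = nodeVal g σ r := by
  constructor
  · intro hζ r hr
    induction r using Nat.strong_induction_on with
    | _ r ih =>
      calc ζ r = (g r).gateVal σ ζ := hζ r hr
        _ = (g r).gateVal σ (nodeVal g σ) :=
          (hwf r hr).gateVal_congr fun s hs => ih s hs (hs.trans hr)
        _ = nodeVal g σ r := (nodeVal_eq_gateVal (hwf r hr)).symm
  · intro hζ r hr
    calc ζ r = nodeVal g σ r := hζ r hr
      _ = (g r).gateVal σ (nodeVal g σ) := nodeVal_eq_gateVal (hwf r hr)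
      _ = (g r).gateVal σ ζ :=
        (hwf r hr).gateVal_congr fun s hs => (hζ s (hs.trans hr)).symm

theorem psiSat_iff_forall_eq_nodeVal_imp (hN : 0 < N) (hwf : ∀ r < N, (g r).RefsBelow r) :
    psiSat g σ ζ N ↔ ((∀ r < N, ζ r = nodeVal g σ r) → nodeVal g σ (N - 1) = true) := by
  have hχ : (∃ r < N, chiHolds g σ ζ r) ↔ ¬ ∀ r < N, ζ r = nodeVal g σ r := by
    rw [← forall_eq_gateVal_iff_forall_eq_nodeVal hwf]
    simp only [chiHolds_iff_ne_gateVal, ne_eq, not_forall, exists_prop]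
  rw [psiSat, hχ, ← imp_iff_not_or]
  exact forall_congr' fun hζ => by rw [hζ (N - 1) (Nat.sub_one_lt_of_lt hN)]

end Tseitin

theorem statement0_general {X Y : Type} (N : ℕ) (hN : 0 < N) (g : ℕ → CNode (X ⊕ Y))
    (hwf : ∀ r < N, (g r).RefsBelow r) (α : X → Bool) :
    (∀ β : Y → Bool, nodeVal g (Sum.elim α β) (N - 1) = true) ↔
      ∀ γ : (Y ⊕ Fin N) → Bool,
        psiSat g (Sum.elim α (fun y => γ (Sum.inl y)))
          (fun r => if h : r < N then γ (Sum.inr ⟨r, h⟩) else false) N := by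
  simp only [psiSat_iff_forall_eq_nodeVal_imp hN hwf]
  constructor
  · intro hC γ _
    exact hC fun y => γ (Sum.inl y)
  · intro hψ β
    let ζ : Fin N → Bool := fun i => nodeVal g (Sum.elim α β) i
    exact hψ (Sum.elim β ζ) fun r hr => dif_pos hr

/-- Correctness of the Tseitin-style transformation collapsing the ∃ᵏ∀* hierarchy:
for a well-formed circuit `g` with `N` nodes over the variables `X ⊕ Y`, there is a
weight-`k` assignment `α` to `X` such that all assignments `β` to `Y` make the circuit
output true iff there is a weight-`k` assignment `α` to `X` such that all assignments
`γ` to `Y` together with the fresh variables `z_0,…,z_{N-1}` satisfy the 3DNF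
formula `ψ'`. -/
theorem statement0 {X Y : Type} [Fintype X] (k N : ℕ) (hN : 0 < N)
    (g : ℕ → CNode (X ⊕ Y))
    (hwf : ∀ r, r < N →
      (∀ a, g r = CNode.neg a → a < r) ∧ (∀ a b, g r = CNode.conj a b → a < r ∧ b < r)) :
    (∃ α : X → Bool, weight α = k ∧
        ∀ β : Y → Bool, nodeVal g (Sum.elim α β) (N - 1) = true) ↔
    (∃ α : X → Bool, weight α = k ∧
        ∀ γ : (Y ⊕ Fin N) → Bool,
          psiSat g (Sum.elim α (fun y => γ (Sum.inl y)))
            (fun r => if h : r < N then γ (Sum.inr ⟨r, h⟩) else false) N) :=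
  exists_congr fun α => and_congr_right fun _ => statement0_general N hN g hwf α
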